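/- Let T be a scalar Calderón–Zygmund operator on ℝ^d with modulus of continuity ω satisfying the Dini condition, let ρ ∈ (2,∞), assume V_ρ(T_*) is bounded on L^q(ℝ^d) for some q ∈ (1,∞), and let r ∈ (1, min{q,ρ}). Fix a cube Q₀, a point x ∈ Q₀, a cube Q with x ∈ Q ⊂ Q₀, and let B_x := B(x, 9d·ℓ(Q)). Then for every ξ ∈ Q and every f ∈ L^q(ℝ^d), V_ρ(T_*(f χ_{(B_x ∩ 3Q₀)∖3Q}))(ξ) ≤ C [M(|f|^r)(x)]^{1/r}, where M is the Hardy–Littlewood maximal operator over cubes and C is independent of Q₀, Q, x, ξ and f. -/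

import Mathlib

open MeasureTheory Set Filter Classical
open scoped ENNReal
noncomputable section

abbrev Rd (d : ℕ) := EuclideanSpace ℝ (Fin d)

/-- An axis-parallel (half-open) cube in `ℝ^d`, given by its center and side length. -/
structure Cube (d : ℕ) where
  c : Fin d → ℝ
  l : ℝ
  hl : 0 < l

/-- The underlying (half-open) set of a cube. -/
def Cube.set {d : ℕ} (Q : Cube d) : Set (Rd d) :=
  {y | ∀ i, Q.c i - Q.l / 2 ≤ y i ∧ y i < Q.c i + Q.l / 2}

/-- The (half-open) set `tQ`, the cube concentric with `Q` of side length `t·ℓ(Q)`. -/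
def Cube.dilate {d : ℕ} (Q : Cube d) (t : ℝ) : Set (Rd d) :=
  {y | ∀ i, Q.c i - t * Q.l / 2 ≤ y i ∧ y i < Q.c i + t * Q.l / 2}

/-- The volume `|Q| = ℓ(Q)^d` of a cube, as an extended nonnegative real. -/
def Cube.vol {d : ℕ} (Q : Cube d) : ℝ≥0∞ := ENNReal.ofReal (Q.l ^ d)

/-- `Q` is one of the dyadic subcubes of `Q₀` obtained by repeated subdivision of `Q₀`
into `2^d` congruent subcubes. -/
def IsDyadicSubcube {d : ℕ} (Q₀ Q : Cube d) : Prop :=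
  ∃ (k : ℕ) (m : Fin d → ℕ), (∀ i, m i < 2 ^ k) ∧ Q.l = Q₀.l / 2 ^ k ∧
    ∀ i, Q.c i = Q₀.c i - Q₀.l / 2 + ((m i : ℝ) + 1 / 2) * (Q₀.l / 2 ^ k)
/-- A scalar Calderón–Zygmund operator on `ℝ^d` with Dini modulus of continuity:
a linear operator `T` bounded on `L²(ℝ^d)` associated with a kernel `K` satisfying the
size condition and the `ω`-smoothness condition, where `ω` is increasing, subadditive,
vanishes at `0`, and satisfies the Dini condition `∫₀¹ ω(t) dt/t < ∞`. -/
structure CZO (d : ℕ) where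
  K : Rd d → Rd d → ℝ
  measK : Measurable (Function.uncurry K)
  ω : ℝ → ℝ
  Cst : ℝ
  hCst : 0 < Cst
  ω_mono : MonotoneOn ω (Set.Ici 0)
  ω_zero : ω 0 = 0
  ω_subadd : ∀ s t : ℝ, 0 ≤ s → 0 ≤ t → ω (s + t) ≤ ω s + ω t
  dini : IntegrableOn (fun t => ω t / t) (Set.Ioo (0 : ℝ) 1)
  size : ∀ x y : Rd d, x ≠ y → |K x y| ≤ Cst / dist x y ^ d
  smooth : ∀ x x' y : Rd d, x ≠ y → dist x x' ≤ dist x y / 2 →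
    |K x y - K x' y| + |K y x - K y x'| ≤ Cst * ω (dist x x' / dist x y) / dist x y ^ d
  T : Lp ℝ 2 (volume : Measure (Rd d)) →L[ℝ] Lp ℝ 2 (volume : Measure (Rd d))
  assoc : ∀ f : Lp ℝ 2 (volume : Measure (Rd d)),
    ∀ᵐ x ∂(volume : Measure (Rd d)), x ∉ tsupport (f : Rd d → ℝ) →
      (T f : Rd d → ℝ) x = ∫ y, K x y * f y

/-- The truncated singular integral `T_ε f(x) = ∫_{|x-y|>ε} K(x,y) f(y) dy`. -/
def CZO.trunc {d : ℕ} (S : CZO d) (ε : ℝ) (f : Rd d → ℝ) (x : Rd d) : ℝ :=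
  ∫ y in {y : Rd d | ε < dist x y}, S.K x y * f y

/-- The variation operator `V_ρ(T_* f)(x)`, with values in `[0,∞]`: the supremum over all
strictly decreasing positive sequences `ε_i → 0` of `(Σ_i |T_{ε_{i+1}}f(x) - T_{ε_i}f(x)|^ρ)^{1/ρ}`. -/
def CZO.var {d : ℕ} (S : CZO d) (ρ : ℝ) (f : Rd d → ℝ) (x : Rd d) : ℝ≥0∞ :=
  ⨆ (ε : ℕ → ℝ) (_ : StrictAnti ε ∧ (∀ i, 0 < ε i) ∧ Tendsto ε atTop (nhds 0)),
    (∑' i : ℕ, ENNReal.ofReal |S.trunc (ε (i + 1)) f x - S.trunc (ε i) f x| ^ ρ) ^ (1 / ρ)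

/-- `V_ρ(T_*)` is bounded on `L^q(ℝ^d)`. -/
def CZO.VarBdd {d : ℕ} (S : CZO d) (ρ q : ℝ) : Prop :=
  ∃ A : ℝ, 0 < A ∧ ∀ f : Rd d → ℝ, Measurable f →
    ∫⁻ x, S.var ρ f x ^ q ∂volume ≤ ENNReal.ofReal A * ∫⁻ x, ENNReal.ofReal |f x| ^ q ∂volume

/-- The weak `(1,1)` operator (quasi-)norm `‖V_ρ(T_*)‖_{L¹ → L^{1,∞}}`. -/
def CZO.weak11Norm {d : ℕ} (S : CZO d) (ρ : ℝ) : ℝ≥0∞ :=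
  sInf {A : ℝ≥0∞ | ∀ f : Rd d → ℝ, Measurable f → ∀ t : ℝ, 0 < t →
    ENNReal.ofReal t * volume {x | ENNReal.ofReal t < S.var ρ f x} ≤
      A * ∫⁻ x, ENNReal.ofReal |f x| ∂volume}

/-- The local grand maximal truncated operator `M_{V_ρ(T_*),Q₀}`. -/
def CZO.grandMaxLoc {d : ℕ} (S : CZO d) (ρ : ℝ) (Q₀ : Cube d) (f : Rd d → ℝ) (x : Rd d) : ℝ≥0∞ :=
  if x ∈ Q₀.set then
    ⨆ (Q : Cube d) (_ : x ∈ Q.set ∧ Q.set ⊆ Q₀.set),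
      essSup (fun ξ => S.var ρ ((Q₀.dilate 3 \ Q.dilate 3).indicator f) ξ)
        (volume.restrict Q.set)
  else 0

/-- The (global) grand maximal truncated operator `M_{V_ρ(T_*)}`. -/
def CZO.grandMax {d : ℕ} (S : CZO d) (ρ : ℝ) (f : Rd d → ℝ) (x : Rd d) : ℝ≥0∞ :=
  ⨆ (Q : Cube d) (_ : x ∈ Q.set),
    essSup (fun ξ => S.var ρ (((Q.dilate 3)ᶜ).indicator f) ξ) (volume.restrict Q.set)

/-- The Hardy–Littlewood maximal operator over cubes, with values in `[0,∞]`. -/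
def maxCube {d : ℕ} (f : Rd d → ℝ) (x : Rd d) : ℝ≥0∞ :=
  ⨆ (Q : Cube d) (_ : x ∈ Q.set), Q.vol⁻¹ * ∫⁻ y in Q.set, ENNReal.ofReal |f y|

/-- The average `⟨|f|⟩_{3Q} = (1/|3Q|) ∫_{3Q} |f|`. -/
def avg3 {d : ℕ} (Q : Cube d) (f : Rd d → ℝ) : ℝ :=
  (∫ y in Q.dilate 3, |f y|) / (3 * Q.l) ^ d
/-- The Euclidean norm of a vector in `ℝ^n`. -/
def enorm' {n : ℕ} (v : Fin n → ℝ) : ℝ := Real.sqrt (∑ i, v i ^ 2)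

/-- The operator norm (with respect to Euclidean norms) of an `n × n` real matrix. -/
def matOpNorm {n : ℕ} (A : Matrix (Fin n) (Fin n) ℝ) : ℝ :=
  sSup ((fun v => enorm' (A.mulVec v)) '' {v | enorm' v ≤ 1})

/-- The spectral power `A^s` of a symmetric matrix `A = U D Uᵗ`, defined as `U D^s Uᵗ`
(junk value `A` if `A` is not symmetric). -/
def Matrix.rpowH {n : ℕ} (A : Matrix (Fin n) (Fin n) ℝ) (s : ℝ) : Matrix (Fin n) (Fin n) ℝ :=
  if h : A.IsHermitian then
    (h.eigenvectorUnitary : Matrix (Fin n) (Fin n) ℝ) *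
      Matrix.diagonal (fun i => h.eigenvalues i ^ s) *
      star (h.eigenvectorUnitary : Matrix (Fin n) (Fin n) ℝ)
  else A

/-- A matrix weight on `ℝ^d`: a measurable function with a.e. symmetric positive definite
values whose operator norm is locally integrable. -/
structure MatrixWeight (d n : ℕ) where
  W : Rd d → Matrix (Fin n) (Fin n) ℝ
  meas : ∀ i j, Measurable fun x => W x i j
  pd : ∀ᵐ x : Rd d, (W x).PosDef
  locInt : LocallyIntegrable (fun x => matOpNorm (W x)) (volume : Measure (Rd d))

/-- The matrix `A_p` characteristic `[W]_{A_p}`. -/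
def MatrixWeight.apConst {d n : ℕ} (W : MatrixWeight d n) (p : ℝ) : ℝ≥0∞ :=
  ⨆ Q : Cube d, Q.vol⁻¹ * ∫⁻ x in Q.set,
    (Q.vol⁻¹ * ∫⁻ t in Q.set,
        ENNReal.ofReal (matOpNorm ((W.W x).rpowH (1 / p) * (W.W t).rpowH (-(1 / p))))
          ^ (p / (p - 1))) ^ (p - 1)

/-- The norm of `f` in `L^p(W)`. -/
def MatrixWeight.wNorm {d n : ℕ} (W : MatrixWeight d n) (p : ℝ)
    (f : Rd d → Fin n → ℝ) : ℝ≥0∞ :=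
  (∫⁻ x, ENNReal.ofReal (enorm' (((W.W x).rpowH (1 / p)).mulVec (f x))) ^ p) ^ (1 / p)

/-- The Euclidean length `|V_ρ(T_{n,*} f⃗)(x)|` of the componentwise variation vector
(with values in `[0,∞]`). -/
def CZO.varVecNorm {d : ℕ} (n : ℕ) (S : CZO d) (ρ : ℝ) (f : Rd d → Fin n → ℝ)
    (x : Rd d) : ℝ≥0∞ :=
  (∑ j : Fin n, S.var ρ (fun y => f y j) x ^ (2 : ℝ)) ^ ((1 : ℝ) / 2)

/-- An `η`-sparse family of cubes. -/
def IsSparse {d : ℕ} (η : ℝ) (F : Set (Cube d)) : Prop :=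
  ∃ E : Cube d → Set (Rd d),
    (∀ Q ∈ F, E Q ⊆ Q.set ∧ MeasurableSet (E Q) ∧ ENNReal.ofReal η * Q.vol ≤ volume (E Q)) ∧
    F.PairwiseDisjoint E

/-- The convex body average `⟨⟨f⃗⟩⟩_{tQ}` of a vector-valued function over the cube `tQ`. -/
def convexBodyAvg {d n : ℕ} (f : Rd d → Fin n → ℝ) (Q : Cube d) (t : ℝ) :
    Set (Fin n → ℝ) :=
  {v | ∃ φ : Rd d → ℝ, Measurable φ ∧ (∀ y, |φ y| ≤ 1) ∧
    ∀ j, v j = (∫ y in Q.dilate t, φ y * f y j) / (t * Q.l) ^ d}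

/-!
On the complement of a dilate `tQ`, `t > 1`, the kernel `K ξ ·` with `ξ ∈ Q` is bounded by a
multiple of `ℓ(Q)⁻ᵈ`, so no cancellation is needed: since `ρ ≥ 1`, the `ρ`-variation is at most the
`1`-variation, and the differences of truncations are integrals over disjoint annuli, whence
`V_ρ(T_* g)(ξ) ≤ ∫ |K ξ y| |g y| dy`. For `g = f χ_E` with `E ⊆ B(x, R ℓ(Q)) ∖ tQ` this is at most
a constant times the average of `|f|` over the cube circumscribed about the ball, and Jensen's
inequality passes from this average to `M(|f| ^ r)(x) ^ (1 / r)`.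
-/

lemma tsum_rpow_rpow_one_div_le_tsum {ι : Type*} (a : ι → ℝ≥0∞) {p : ℝ} (hp : 1 ≤ p) :
    (∑' i, a i ^ p) ^ (1 / p) ≤ ∑' i, a i := by
  have rpow_eq_mul (b : ℝ≥0∞) : b ^ p = b * b ^ (p - 1) := by
    conv_lhs => rw [← add_sub_cancel 1 p]
    rw [ENNReal.rpow_add_of_nonneg 1 (p - 1) zero_le_one (sub_nonneg.2 hp), ENNReal.rpow_one]
  rw [one_div, ENNReal.rpow_inv_le_iff (zero_lt_one.trans_le hp)]
  calc ∑' i, a i ^ p = ∑' i, a i * a i ^ (p - 1) := by simp only [rpow_eq_mul]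
    _ ≤ ∑' i, a i * (∑' j, a j) ^ (p - 1) := by
        gcongr with i
        exact ENNReal.le_tsum i
    _ = (∑' i, a i) ^ p := by rw [ENNReal.tsum_mul_right, ← rpow_eq_mul]

lemma laverage_enorm_le_rpow_laverage_enorm_rpow {α E : Type*} [MeasurableSpace α]
    [NormedAddCommGroup E] {μ : Measure α} {f : α → E} {r : ℝ} (hr : 1 ≤ r)
    (hf : AEStronglyMeasurable f μ) :
    ⨍⁻ a, ‖f a‖ₑ ∂μ ≤ (⨍⁻ a, ‖f a‖ₑ ^ r ∂μ) ^ (1 / r) := by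
  rcases eq_or_ne μ 0 with rfl | hμ
  · simp
  by_cases hμ_top : μ univ = ⊤
  · simp [laverage, hμ_top]
  have : NeZero μ := ⟨hμ⟩
  have : IsFiniteMeasure μ := ⟨lt_top_iff_ne_top.2 hμ_top⟩
  have h := eLpNorm'_le_eLpNorm'_of_exponent_le zero_lt_one hr ((μ univ)⁻¹ • μ)
    (hf.smul_measure (μ univ)⁻¹)
  simpa only [laverage, eLpNorm', ENNReal.rpow_one, div_one] using h

namespace Cube

variable {d : ℕ}

lemma dilate_one (Q : Cube d) : Q.dilate 1 = Q.set := by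
  simp only [dilate, set, one_mul]

lemma dilate_eq_preimage_pi (Q : Cube d) (t : ℝ) :
    Q.dilate t = (MeasurableEquiv.toLp 2 (Fin d → ℝ)).symm ⁻¹'
      univ.pi fun i ↦ Ico (Q.c i - t * Q.l / 2) (Q.c i + t * Q.l / 2) := by
  ext y
  simp [dilate, Set.mem_pi]

lemma measurableSet_dilate (Q : Cube d) (t : ℝ) : MeasurableSet (Q.dilate t) := by
  rw [dilate_eq_preimage_pi]
  exact (MeasurableEquiv.measurable _) (MeasurableSet.univ_pi fun _ ↦ measurableSet_Ico)

lemma volume_dilate (Q : Cube d) (t : ℝ) :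
    volume (Q.dilate t) = ENNReal.ofReal (t * Q.l) ^ d := by
  have side (i : Fin d) : Q.c i + t * Q.l / 2 - (Q.c i - t * Q.l / 2) = t * Q.l := by ring
  rw [dilate_eq_preimage_pi,
    (EuclideanSpace.volume_preserving_symm_measurableEquiv_toLp (Fin d)).measure_preimage_equiv,
    Real.volume_pi_Ico]
  simp only [side, Finset.prod_const, Finset.card_univ, Fintype.card_fin]

lemma volume_set (Q : Cube d) : volume Q.set = Q.vol := by
  rw [← dilate_one, volume_dilate, one_mul, vol, ENNReal.ofReal_pow Q.hl.le]

lemma mul_le_dist_of_mem_dilate_of_notMem_dilate (Q : Cube d) {s t : ℝ} {x y : Rd d}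
    (hx : x ∈ Q.dilate s) (hy : y ∉ Q.dilate t) : (t - s) / 2 * Q.l ≤ dist x y := by
  obtain ⟨i, hi⟩ : ∃ i, ¬(Q.c i - t * Q.l / 2 ≤ y i ∧ y i < Q.c i + t * Q.l / 2) :=
    not_forall.1 hy
  have hxi := hx i
  calc (t - s) / 2 * Q.l ≤ |x i - y i| := by
        rcases not_and_or.1 hi with hlow | hhigh
        · exact le_abs.2 (.inl (by linarith [hxi.1]))
        · exact le_abs.2 (.inr (by linarith [hxi.2]))
    _ ≤ dist x y := PiLp.dist_apply_le x y i

/-- The cube circumscribed about the ball `B(x, R)`: it has center `x` and side length `2R`. -/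
def circumscribed (x : Rd d) (R : ℝ) (hR : 0 < R) : Cube d :=
  ⟨x, 2 * R, by positivity⟩

lemma ball_subset_circumscribed (x : Rd d) {R : ℝ} (hR : 0 < R) :
    Metric.ball x R ⊆ (circumscribed x R hR).set := by
  intro y hy i
  have hcoord : |y i - x i| < R := (PiLp.dist_apply_le y x i).trans_lt hy
  constructor <;> simp only [circumscribed] <;> linarith [abs_lt.1 hcoord]

lemma setLAverage_enorm_le_maxCube (Q : Cube d) {x : Rd d} (hx : x ∈ Q.set) (g : Rd d → ℝ) :
    ⨍⁻ y in Q.set, ‖g y‖ₑ ∂volume ≤ maxCube g x := by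
  simp only [setLAverage_eq, volume_set, ENNReal.div_eq_inv_mul, Real.enorm_eq_ofReal_abs]
  exact le_iSup₂ (f := fun (P : Cube d) (_ : x ∈ P.set) ↦
    P.vol⁻¹ * ∫⁻ y in P.set, ENNReal.ofReal |g y|) Q hx

lemma setLAverage_enorm_le_maxCube_rpow (Q : Cube d) {x : Rd d} (hx : x ∈ Q.set) {r : ℝ}
    (hr : 1 ≤ r) {f : Rd d → ℝ} (hf : AEStronglyMeasurable f) :
    ⨍⁻ y in Q.set, ‖f y‖ₑ ∂volume ≤ maxCube (fun y ↦ |f y| ^ r) x ^ (1 / r) := by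
  have hr₀ : 0 ≤ r := zero_le_one.trans hr
  have enorm_rpow (y : Rd d) : ‖f y‖ₑ ^ r = ‖|f y| ^ r‖ₑ := by
    rw [Real.enorm_rpow_of_nonneg (abs_nonneg _) hr₀, Real.enorm_abs]
  calc ⨍⁻ y in Q.set, ‖f y‖ₑ ∂volume
      ≤ (⨍⁻ y in Q.set, ‖f y‖ₑ ^ r ∂volume) ^ (1 / r) :=
        laverage_enorm_le_rpow_laverage_enorm_rpow hr hf.restrict
    _ ≤ maxCube (fun y ↦ |f y| ^ r) x ^ (1 / r) := by
        simp only [enorm_rpow]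
        gcongr
        exact Q.setLAverage_enorm_le_maxCube hx _

end Cube

lemma setLIntegral_ball_enorm_le_maxCube_rpow {d : ℕ} (x : Rd d) {R r : ℝ} (hR : 0 < R)
    (hr : 1 ≤ r) {f : Rd d → ℝ} (hf : AEStronglyMeasurable f) :
    ∫⁻ y in Metric.ball x R, ‖f y‖ₑ ≤
      ENNReal.ofReal ((2 * R) ^ d) * maxCube (fun y ↦ |f y| ^ r) x ^ (1 / r) := by
  have hball := Cube.ball_subset_circumscribed x hR
  set Q := Cube.circumscribed x R hR
  have hvol : volume Q.set ≠ ⊤ := by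
    rw [Q.volume_set]
    exact ENNReal.ofReal_ne_top
  calc ∫⁻ y in Metric.ball x R, ‖f y‖ₑ
      ≤ ∫⁻ y in Q.set, ‖f y‖ₑ := lintegral_mono_set hball
    _ = Q.vol * ⨍⁻ y in Q.set, ‖f y‖ₑ ∂volume := by
        rw [← Q.volume_set, measure_mul_setLAverage _ hvol]
    _ ≤ Q.vol * maxCube (fun y ↦ |f y| ^ r) x ^ (1 / r) := by
        gcongr
        exact Q.setLAverage_enorm_le_maxCube_rpow (hball (Metric.mem_ball_self hR)) hr hf

namespace CZO

variable {d : ℕ} (S : CZO d)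

lemma trunc_sub_trunc {g : Rd d → ℝ} {x : Rd d} (hg : Integrable fun y ↦ S.K x y * g y)
    {a b : ℝ} (hab : a ≤ b) :
    S.trunc a g x - S.trunc b g x = ∫ y in dist x ⁻¹' Ioc a b, S.K x y * g y := by
  have annulus : dist x ⁻¹' Ioc a b = {y | a < dist x y} \ {y | b < dist x y} := by
    ext y
    simp
  have outer_meas : MeasurableSet {y | b < dist x y} :=
    measurableSet_lt measurable_const (by fun_prop)
  have outer_subset : {y | b < dist x y} ⊆ {y | a < dist x y} := fun _ hy ↦ hab.trans_lt hy
  rw [annulus, setIntegral_sdiff outer_meas hg.integrableOn outer_subset, trunc, trunc]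

lemma var_le_lintegral_enorm {ρ : ℝ} (hρ : 1 ≤ ρ) {g : Rd d → ℝ} (hg : AEStronglyMeasurable g)
    (x : Rd d) : S.var ρ g x ≤ ∫⁻ y, ‖S.K x y * g y‖ₑ := by
  by_cases htop : ∫⁻ y, ‖S.K x y * g y‖ₑ = ⊤
  · exact htop ▸ le_top
  have hKg : Integrable fun y ↦ S.K x y * g y :=
    ⟨(S.measK.comp measurable_prodMk_left).aestronglyMeasurable.mul hg,
      lt_top_iff_ne_top.2 htop⟩
  refine iSup₂_le fun ε ⟨hε, _, _⟩ ↦ ?_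
  let annulus (i : ℕ) : Set (Rd d) := dist x ⁻¹' Ioc (ε (i + 1)) (ε i)
  have annulus_meas (i : ℕ) : MeasurableSet (annulus i) :=
    measurable_const.dist measurable_id measurableSet_Ioc
  have annulus_disj : Pairwise (Function.onFun Disjoint annulus) := fun _ _ hij ↦
    (hε.antitone.pairwise_disjoint_on_Ioc_succ hij).preimage _
  calc (∑' i, ENNReal.ofReal |S.trunc (ε (i + 1)) g x - S.trunc (ε i) g x| ^ ρ) ^ (1 / ρ)
      ≤ ∑' i, ENNReal.ofReal |S.trunc (ε (i + 1)) g x - S.trunc (ε i) g x| :=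
        tsum_rpow_rpow_one_div_le_tsum _ hρ
    _ ≤ ∑' i, ∫⁻ y in annulus i, ‖S.K x y * g y‖ₑ := by
        gcongr with i
        rw [S.trunc_sub_trunc hKg (hε i.lt_succ_self).le, ← Real.enorm_eq_ofReal_abs]
        exact enorm_integral_le_lintegral_enorm _
    _ = ∫⁻ y in ⋃ i, annulus i, ‖S.K x y * g y‖ₑ :=
        (lintegral_iUnion annulus_meas annulus_disj _).symm
    _ ≤ ∫⁻ y, ‖S.K x y * g y‖ₑ := setLIntegral_le_lintegral _ _

lemma enorm_kernel_le {δ : ℝ} (hδ : 0 < δ) {x y : Rd d} (hxy : δ ≤ dist x y) :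
    ‖S.K x y‖ₑ ≤ ENNReal.ofReal (S.Cst / δ ^ d) := by
  have hCst := S.hCst.le
  rw [Real.enorm_eq_ofReal_abs]
  refine ENNReal.ofReal_le_ofReal ?_
  calc |S.K x y| ≤ S.Cst / dist x y ^ d := S.size x y (dist_pos.1 (hδ.trans_le hxy))
    _ ≤ S.Cst / δ ^ d := by gcongr

lemma var_indicator_le_mul_setLIntegral {ρ : ℝ} (hρ : 1 ≤ ρ) {f : Rd d → ℝ}
    (hf : AEStronglyMeasurable f) {E : Set (Rd d)} (hE : MeasurableSet E) {δ : ℝ} (hδ : 0 < δ)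
    {x : Rd d} (hx : ∀ y ∈ E, δ ≤ dist x y) :
    S.var ρ (E.indicator f) x ≤ ENNReal.ofReal (S.Cst / δ ^ d) * ∫⁻ y in E, ‖f y‖ₑ := by
  calc S.var ρ (E.indicator f) x
      ≤ ∫⁻ y, ‖S.K x y * E.indicator f y‖ₑ := S.var_le_lintegral_enorm hρ (hf.indicator hE) x
    _ = ∫⁻ y in E, ‖S.K x y‖ₑ * ‖f y‖ₑ := by
        rw [← lintegral_indicator hE]
        simp only [enorm_mul, enorm_indicator_eq_indicator_enorm, indicator_mul_right]
    _ ≤ ∫⁻ y in E, ENNReal.ofReal (S.Cst / δ ^ d) * ‖f y‖ₑ := by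
        refine setLIntegral_mono' hE fun y hy ↦ ?_
        gcongr
        exact S.enorm_kernel_le hδ (hx y hy)
    _ = ENNReal.ofReal (S.Cst / δ ^ d) * ∫⁻ y in E, ‖f y‖ₑ :=
        lintegral_const_mul' _ _ ENNReal.ofReal_ne_top

end CZO

theorem variation_local_part_bound_general {d : ℕ} (S : CZO d) {ρ r R t : ℝ} (hρ : 1 ≤ ρ)
    (hr : 1 ≤ r) (hR : 0 < R) (ht : 1 < t) :
    ∃ C : ℝ, 0 < C ∧ ∀ (Q : Cube d) (x : Rd d), ∀ ξ ∈ Q.set, ∀ E : Set (Rd d),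
      MeasurableSet E → E ⊆ Metric.ball x (R * Q.l) \ Q.dilate t →
      ∀ f : Rd d → ℝ, AEStronglyMeasurable f →
      S.var ρ (E.indicator f) ξ ≤
        ENNReal.ofReal C * maxCube (fun y ↦ |f y| ^ r) x ^ (1 / r) := by
  have hCst := S.hCst
  have hκ : 0 < (t - 1) / 2 := by linarith
  refine ⟨S.Cst * (2 * R / ((t - 1) / 2)) ^ d, by positivity, ?_⟩
  intro Q x ξ hξ E hE hE_sub f hf
  have hl := Q.hl
  have hδ : 0 < (t - 1) / 2 * Q.l := mul_pos hκ hl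
  have hdist (y) (hy : y ∈ E) : (t - 1) / 2 * Q.l ≤ dist ξ y :=
    Q.mul_le_dist_of_mem_dilate_of_notMem_dilate (Q.dilate_one.symm ▸ hξ) (hE_sub hy).2
  calc S.var ρ (E.indicator f) ξ
      ≤ ENNReal.ofReal (S.Cst / ((t - 1) / 2 * Q.l) ^ d) * ∫⁻ y in E, ‖f y‖ₑ :=
        S.var_indicator_le_mul_setLIntegral hρ hf hE hδ hdist
    _ ≤ ENNReal.ofReal (S.Cst / ((t - 1) / 2 * Q.l) ^ d) *
          ∫⁻ y in Metric.ball x (R * Q.l), ‖f y‖ₑ := by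
        gcongr
        exact fun y hy ↦ (hE_sub hy).1
    _ ≤ ENNReal.ofReal (S.Cst / ((t - 1) / 2 * Q.l) ^ d) *
          (ENNReal.ofReal ((2 * (R * Q.l)) ^ d) * maxCube (fun y ↦ |f y| ^ r) x ^ (1 / r)) := by
        gcongr
        exact setLIntegral_ball_enorm_le_maxCube_rpow x (by positivity) hr hf
    _ = ENNReal.ofReal (S.Cst * (2 * R / ((t - 1) / 2)) ^ d) *
          maxCube (fun y ↦ |f y| ^ r) x ^ (1 / r) := by
        rw [← mul_assoc, ← ENNReal.ofReal_mul (by positivity), div_mul_eq_mul_div, mul_div_assoc,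
          ← div_pow, ← mul_assoc 2 R, mul_div_mul_right _ _ hl.ne']

/-- Bound for the variation of the truncation of `f` to `(B_x ∩ 3Q₀) ∖ 3Q`,
in terms of the Hardy–Littlewood maximal function. -/
theorem variation_local_part_bound
    (d : ℕ) (hd : 0 < d) (S : CZO d) (ρ q : ℝ) (hρ : 2 < ρ) (hq : 1 < q)
    (hbdd : S.VarBdd ρ q) (r : ℝ) (hr : 1 < r) (hrq : r < q) (hrρ : r < ρ) :
    ∃ C : ℝ, 0 < C ∧ ∀ (Q₀ Q : Cube d) (x : Rd d), x ∈ Q₀.set → x ∈ Q.set →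
      Q.set ⊆ Q₀.set → ∀ ξ ∈ Q.set, ∀ f : Rd d → ℝ, Measurable f →
      (∫⁻ y, ENNReal.ofReal |f y| ^ q ∂volume) ≠ ⊤ →
      S.var ρ (((Metric.ball x (9 * (d : ℝ) * Q.l) ∩ Q₀.dilate 3) \ Q.dilate 3).indicator f) ξ ≤
        ENNReal.ofReal C * maxCube (fun y => |f y| ^ r) x ^ (1 / r) := by
  obtain ⟨C, hC, hbound⟩ := variation_local_part_bound_general S (R := 9 * (d : ℝ))
    (by linarith : 1 ≤ ρ) hr.le (by positivity) (by norm_num : (1 : ℝ) < 3)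
  refine ⟨C, hC, fun Q₀ Q x _ _ _ ξ hξ f hf _ ↦ ?_⟩
  exact hbound Q x ξ hξ _
    ((measurableSet_ball.inter (Q₀.measurableSet_dilate 3)).diff (Q.measurableSet_dilate 3))
    (sdiff_subset_sdiff_left inter_subset_left) f hf.aestronglyMeasurable
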